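/- Define ψ(t) = 2^{√(log₂(1+t))} − 1, g0 = sup_{k≥0} 2^{k−k²} χ_{[0,2^{k²})}, and a(t,g0) = (1/ψ(t)) ∫_0^t g0(s) ds. Then lim_{n→∞} a(2^{n²}, g0) = 2 and lim_{n→∞} a(2^{(n+1/2)²}, g0) = √2. Consequently limsup_{t→∞} a(t,g0) ≥ 2 > √2 ≥ liminf_{t→∞} a(t,g0), so lim_{t→∞} a(t,g0) does not exist. -/

import Mathlib

open MeasureTheory Filter Set

/-- `ψ(t) = 2^√(log₂(1+t)) - 1`. -/
noncomputable def psi0 : ℝ → ℝ := fun t => (2:ℝ) ^ Real.sqrt (Real.logb 2 (1 + t)) - 1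

/-- `g0 = sup_{k ≥ 0} 2^(k - k²) χ_[0, 2^(k²))`. -/
noncomputable def g0 : ℝ → ℝ := fun t =>
  ⨆ k : ℕ, if t < (2:ℝ) ^ (k ^ 2) then (2:ℝ) ^ ((k : ℤ) - (k : ℤ) ^ 2) else 0

/-- `a(t, g0) = (1/ψ(t)) ∫_0^t g0(s) ds`. -/
noncomputable def aG : ℝ → ℝ := fun t => (∫ s in (0:ℝ)..t, g0 s) / psi0 t

/-!
Put `t = 2 ^ (x ^ 2)`. Then `ψ t` is asymptotic to `2 ^ x`, because `√(x ^ 2 + 1) - x → 0`.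
On `[2 ^ (n ^ 2), 2 ^ ((n + 1) ^ 2))` the supremum defining `g0` is attained at `k = n + 1`, so
`g0` is an explicit step function. For `x = n + θ` with `θ ∈ [0, 1)` fixed, the steps before
`2 ^ (n ^ 2)` contribute about `2 * 2 ^ n` to the integral and the current step only `o (2 ^ n)`.
Hence `a (2 ^ ((n + θ) ^ 2)) → 2 ^ (1 - θ)`, and each choice of `θ` gives a different cluster point.
-/

open scoped Topology

section StepFunction

variable {ι α β : Type*} [LinearOrder α] [Zero β] [ConditionallyCompleteLattice β]
  {r : ι → α} {c : ι → β}

lemma iSup_ite_lt_eq [LinearOrder ι] (hc : Antitone c) (hc₀ : ∀ k, 0 ≤ c k) {t : α} {m : ι}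
    (hr : ∀ k < m, r k ≤ t) (ht : t < r m) : ⨆ k, (if t < r k then c k else 0) = c m := by
  refine IsGreatest.csSup_eq ⟨⟨m, if_pos ht⟩, ?_⟩
  rintro _ ⟨k, rfl⟩
  dsimp only
  split_ifs with hk
  · exact hc (not_lt.1 fun hkm => (hr k hkm).not_gt hk)
  · exact hc₀ m

lemma antitone_iSup_ite_lt (hc : BddAbove (range c)) (hc₀ : ∀ k, 0 ≤ c k) :
    Antitone fun t => ⨆ k, (if t < r k then c k else 0) := by
  intro s t hst
  refine ciSup_mono (hc.range_mono _ fun k => ?_) fun k => ?_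
  · split_ifs
    exacts [le_rfl, hc₀ k]
  · split_ifs with ht hs
    exacts [le_rfl, absurd (hst.trans_lt ht) hs, hc₀ k, le_rfl]

end StepFunction

lemma antitone_zpow_sub_sq {b : ℝ} (hb : 1 ≤ b) :
    Antitone fun k : ℕ => b ^ ((k : ℤ) - (k : ℤ) ^ 2) := by
  refine antitone_nat_of_succ_le fun k => zpow_le_zpow_right₀ hb ?_
  push_cast
  linarith [Int.natCast_nonneg k]

lemma rpow_natCast_sq (b : ℝ) (n : ℕ) : b ^ ((n : ℝ) ^ 2) = b ^ (n ^ 2) := by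
  exact_mod_cast Real.rpow_natCast b (n ^ 2)

lemma g0_nonneg (t : ℝ) : 0 ≤ g0 t :=
  Real.iSup_nonneg fun k => by positivity

lemma antitone_g0 : Antitone g0 :=
  antitone_iSup_ite_lt
    ⟨_, forall_mem_range.2 fun k => antitone_zpow_sub_sq one_le_two k.zero_le⟩
    fun k => by positivity

lemma g0_eq_zpow {m : ℕ} {t : ℝ} (hl : ∀ k < m, (2 : ℝ) ^ (k ^ 2) ≤ t) (hu : t < 2 ^ (m ^ 2)) :
    g0 t = 2 ^ ((m : ℤ) - (m : ℤ) ^ 2) :=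
  iSup_ite_lt_eq (antitone_zpow_sub_sq one_le_two) (fun k => by positivity) hl hu

lemma integral_g0_of_step {m : ℕ} {a b : ℝ} (hab : a ≤ b)
    (hl : ∀ k < m, (2 : ℝ) ^ (k ^ 2) ≤ a) (hu : b ≤ 2 ^ (m ^ 2)) :
    ∫ s in a..b, g0 s = (b - a) * 2 ^ ((m : ℤ) - (m : ℤ) ^ 2) := by
  rw [intervalIntegral.integral_congr_uIoo (g := fun _ => (2 : ℝ) ^ ((m : ℤ) - (m : ℤ) ^ 2)),
    intervalIntegral.integral_const, smul_eq_mul]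
  rw [uIoo_of_le hab]
  exact fun s hs => g0_eq_zpow (fun k hk => (hl k hk).trans hs.1.le) (hs.2.trans_le hu)

lemma integral_g0_from_two_pow_sq {n : ℕ} {t : ℝ} (hl : (2 : ℝ) ^ (n ^ 2) ≤ t)
    (hu : t ≤ 2 ^ ((n + 1) ^ 2)) :
    ∫ s in (2 : ℝ) ^ (n ^ 2)..t, g0 s = (t / 2 ^ (n ^ 2) - 1) / 2 ^ n := by
  have hk (k : ℕ) (hkn : k < n + 1) : (2 : ℝ) ^ (k ^ 2) ≤ 2 ^ (n ^ 2) := by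
    gcongr
    exacts [one_le_two, Nat.le_of_lt_succ hkn]
  have height : (2 : ℝ) ^ (((n + 1 : ℕ) : ℤ) - ((n + 1 : ℕ) : ℤ) ^ 2)
      = (2 ^ (n ^ 2) * 2 ^ n)⁻¹ := by
    rw [← pow_add, ← zpow_natCast, ← zpow_neg]
    congr 1
    push_cast
    ring
  rw [integral_g0_of_step hl hk hu, height]
  field_simp

lemma integral_g0_add_adjacent (a b c : ℝ) :
    (∫ s in a..b, g0 s) + ∫ s in b..c, g0 s = ∫ s in a..c, g0 s :=
  intervalIntegral.integral_add_adjacent_intervals antitone_g0.intervalIntegrable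
    antitone_g0.intervalIntegrable

lemma integral_g0_zero_two_pow_sq (n : ℕ) :
    ∫ s in (0 : ℝ)..2 ^ (n ^ 2), g0 s = 2 * 2 ^ n - 3 + 2 / 2 ^ n := by
  induction n with
  | zero =>
    rw [integral_g0_of_step (m := 0) (by positivity) (by simp) le_rfl]
    norm_num
  | succ n ih =>
    have hle : (2 : ℝ) ^ (n ^ 2) ≤ 2 ^ ((n + 1) ^ 2) := by
      gcongr
      exacts [one_le_two, n.le_succ]
    have hsq : (2 : ℝ) ^ ((n + 1) ^ 2) = 2 ^ (n ^ 2) * (2 ^ n) ^ 2 * 2 := by ring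
    rw [← integral_g0_add_adjacent 0 (2 ^ (n ^ 2)), ih, integral_g0_from_two_pow_sq hle le_rfl,
      hsq, pow_succ]
    field_simp
    ring

lemma two_rpow_add_sq_mem_Icc {θ : ℝ} (hθ : θ ∈ Icc 0 1) (n : ℕ) :
    (2 : ℝ) ^ ((n + θ) ^ 2) ∈ Icc ((2 : ℝ) ^ (n ^ 2)) (2 ^ ((n + 1) ^ 2)) := by
  obtain ⟨hθ₀, hθ₁⟩ := hθ
  rw [← rpow_natCast_sq, ← rpow_natCast_sq]
  push_cast
  constructor <;> gcongr <;> linarith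

lemma integral_g0_two_rpow_add_sq_div {θ : ℝ} (hθ : θ ∈ Icc 0 1) (n : ℕ) :
    (∫ s in (0 : ℝ)..2 ^ ((n + θ) ^ 2), g0 s) / 2 ^ n =
      2 - 3 * (1 / 2) ^ n + (1 / 4) ^ n + 2 ^ (θ ^ 2) * ((2 : ℝ) ^ (2 * (θ - 1))) ^ n := by
  have hsplit : (2 : ℝ) ^ ((n + θ) ^ 2)
      = 2 ^ (n ^ 2) * (2 ^ (θ ^ 2) * ((2 : ℝ) ^ (2 * (θ - 1))) ^ n * (2 ^ n) ^ 2) := by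
    have hexp : ((n : ℝ) + θ) ^ 2 = (n : ℝ) ^ 2 + (θ ^ 2 + 2 * (θ - 1) * n + (n + n)) := by ring
    simp only [hexp, Real.rpow_add two_pos, rpow_natCast_sq, Real.rpow_mul_natCast zero_le_two,
      Real.rpow_natCast, sq ((2 : ℝ) ^ n)]
  have hfour : (1 / 4 : ℝ) ^ n = 1 / (2 ^ n) ^ 2 := by
    rw [← pow_mul, mul_comm, pow_mul, one_div_pow]
    norm_num
  obtain ⟨hl, hu⟩ := two_rpow_add_sq_mem_Icc hθ n
  rw [← integral_g0_add_adjacent 0 (2 ^ (n ^ 2)), integral_g0_zero_two_pow_sq,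
    integral_g0_from_two_pow_sq hl hu, hsplit, hfour, one_div_pow]
  field_simp
  ring

lemma tendsto_integral_g0_two_rpow_add_sq_div {θ : ℝ} (hθ : θ ∈ Ico 0 1) :
    Tendsto (fun n : ℕ => (∫ s in (0 : ℝ)..2 ^ ((n + θ) ^ 2), g0 s) / 2 ^ n) atTop (𝓝 2) := by
  have hratio : (2 : ℝ) ^ (2 * (θ - 1)) < 1 :=
    Real.rpow_lt_one_of_one_lt_of_neg one_lt_two (by linarith [hθ.2])
  have hhalf : Tendsto (fun n : ℕ => (1 / 2 : ℝ) ^ n) atTop (𝓝 0) :=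
    tendsto_pow_atTop_nhds_zero_of_lt_one (by norm_num) (by norm_num)
  have hquarter : Tendsto (fun n : ℕ => (1 / 4 : ℝ) ^ n) atTop (𝓝 0) :=
    tendsto_pow_atTop_nhds_zero_of_lt_one (by norm_num) (by norm_num)
  have hcurrent : Tendsto (fun n : ℕ => ((2 : ℝ) ^ (2 * (θ - 1))) ^ n) atTop (𝓝 0) :=
    tendsto_pow_atTop_nhds_zero_of_lt_one (by positivity) hratio
  simp only [integral_g0_two_rpow_add_sq_div (Ico_subset_Icc_self hθ)]
  simpa using ((hhalf.const_mul 3).const_sub 2).add hquarter |>.add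
    (hcurrent.const_mul (2 ^ (θ ^ 2)))

section SqrtLogb

variable {b x : ℝ}

lemma le_sqrt_logb_one_add_rpow_sq (hb : 1 < b) : x ≤ √(Real.logb b (1 + b ^ (x ^ 2))) := by
  have hpos : 0 < b ^ (x ^ 2) := by positivity
  refine Real.le_sqrt_of_sq_le ?_
  rw [Real.le_logb_iff_rpow_le hb (by linarith)]
  linarith

lemma sqrt_logb_one_add_rpow_sq_le (hb : 2 ≤ b) (hx : 0 < x) :
    √(Real.logb b (1 + b ^ (x ^ 2))) ≤ x + x⁻¹ := by
  have hone : 1 ≤ b ^ (x ^ 2) := Real.one_le_rpow (by linarith) (by positivity)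
  have hsq : x ^ 2 + 1 ≤ (x + x⁻¹) ^ 2 := by
    have : (x + x⁻¹) ^ 2 = x ^ 2 + 2 + x⁻¹ ^ 2 := by field_simp; ring
    nlinarith [sq_nonneg x⁻¹]
  refine Real.sqrt_le_iff.2 ⟨by positivity, ?_⟩
  rw [Real.logb_le_iff_le_rpow (by linarith) (by linarith)]
  calc 1 + b ^ (x ^ 2) ≤ b ^ (x ^ 2) * b := by nlinarith
    _ = b ^ (x ^ 2 + 1) := by rw [Real.rpow_add (by linarith), Real.rpow_one]
    _ ≤ b ^ (x + x⁻¹) ^ 2 := Real.rpow_le_rpow_of_exponent_le (by linarith) hsq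

lemma tendsto_sqrt_logb_one_add_rpow_sq_sub (hb : 2 ≤ b) :
    Tendsto (fun x => √(Real.logb b (1 + b ^ (x ^ 2))) - x) atTop (𝓝 0) := by
  refine tendsto_of_tendsto_of_tendsto_of_le_of_le' tendsto_const_nhds tendsto_inv_atTop_zero
    (Eventually.of_forall fun x => sub_nonneg.2 (le_sqrt_logb_one_add_rpow_sq (by linarith))) ?_
  filter_upwards [eventually_gt_atTop 0] with x hx
  linarith [sqrt_logb_one_add_rpow_sq_le hb hx]

end SqrtLogb

lemma tendsto_psi0_two_rpow_sq_div :
    Tendsto (fun x : ℝ => psi0 (2 ^ (x ^ 2)) / 2 ^ x) atTop (𝓝 1) := by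
  have hmain : Tendsto (fun x : ℝ => (2 : ℝ) ^ (√(Real.logb 2 (1 + 2 ^ (x ^ 2))) - x))
      atTop (𝓝 1) := by
    simpa [Function.comp_def] using ((Real.continuous_const_rpow two_ne_zero).tendsto 0).comp
      (tendsto_sqrt_logb_one_add_rpow_sq_sub le_rfl)
  have hinv : Tendsto (fun x : ℝ => ((2 : ℝ) ^ x)⁻¹) atTop (𝓝 0) :=
    tendsto_inv_atTop_zero.comp (tendsto_rpow_atTop_of_base_gt_one 2 one_lt_two)
  have hdiff := hmain.sub hinv
  rw [sub_zero] at hdiff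
  refine hdiff.congr fun x => ?_
  rw [Real.rpow_sub two_pos, psi0, sub_div, one_div]

lemma tendsto_aG_two_rpow_add_sq {θ : ℝ} (hθ : θ ∈ Ico 0 1) :
    Tendsto (fun n : ℕ => aG (2 ^ ((n + θ) ^ 2))) atTop (𝓝 (2 ^ (1 - θ))) := by
  have hpsi := tendsto_psi0_two_rpow_sq_div.comp
    (tendsto_atTop_add_const_right atTop θ tendsto_natCast_atTop_atTop)
  have hquot := ((tendsto_integral_g0_two_rpow_add_sq_div hθ).div hpsi one_ne_zero).div_const
    ((2 : ℝ) ^ θ)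
  rw [div_one, ← Real.rpow_one_sub' zero_le_two (sub_ne_zero.2 hθ.2.ne')] at hquot
  refine hquot.congr fun n => ?_
  simp only [Function.comp_apply, Pi.div_apply, aG, Real.rpow_add two_pos, Real.rpow_natCast]
  field_simp

lemma tendsto_two_rpow_natCast_add_sq_atTop (θ : ℝ) :
    Tendsto (fun n : ℕ => (2 : ℝ) ^ ((n + θ) ^ 2)) atTop atTop :=
  (tendsto_rpow_atTop_of_base_gt_one 2 one_lt_two).comp <| (tendsto_pow_atTop two_ne_zero).comp <|
    tendsto_atTop_add_const_right atTop θ tendsto_natCast_atTop_atTop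

lemma mapClusterPt_aG {θ : ℝ} (hθ : θ ∈ Ico 0 1) : MapClusterPt (2 ^ (1 - θ)) atTop aG :=
  (tendsto_aG_two_rpow_add_sq hθ).mapClusterPt.of_comp (tendsto_two_rpow_natCast_add_sq_atTop θ)

lemma one_le_psi0 {t : ℝ} (ht : 1 ≤ t) : 1 ≤ psi0 t := by
  have hlog : 1 ≤ Real.logb 2 (1 + t) := by
    rw [Real.le_logb_iff_rpow_le one_lt_two (by linarith), Real.rpow_one]
    linarith
  have hpow : (2 : ℝ) ^ (1 : ℝ) ≤ 2 ^ √(Real.logb 2 (1 + t)) :=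
    Real.rpow_le_rpow_of_exponent_le one_le_two (Real.one_le_sqrt.2 hlog)
  rw [Real.rpow_one] at hpow
  unfold psi0
  linarith

lemma integral_g0_le_four_mul_psi0_add_one {t : ℝ} (ht : 0 ≤ t) :
    ∫ s in (0 : ℝ)..t, g0 s ≤ 4 * (psi0 t + 1) := by
  set x := √(Real.logb 2 (1 + t)) with hx
  set n := ⌊x⌋₊
  have hle : t ≤ 2 ^ ((n + 1) ^ 2) := by
    have hsq : Real.logb 2 (1 + t) ≤ ((n + 1 : ℕ) : ℝ) ^ 2 := by
      rw [← Real.sqrt_le_left (by positivity)]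
      exact_mod_cast (Nat.lt_floor_add_one x).le
    rw [Real.logb_le_iff_le_rpow one_lt_two (by linarith), rpow_natCast_sq] at hsq
    linarith
  have hpow : (2 : ℝ) ^ n ≤ psi0 t + 1 := by
    rw [psi0, sub_add_cancel, ← Real.rpow_natCast, ← hx]
    exact Real.rpow_le_rpow_of_exponent_le one_le_two (Nat.floor_le (Real.sqrt_nonneg _))
  have hinv : 2 / (2 : ℝ) ^ (n + 1) ≤ 1 :=
    div_le_one_of_le₀ (le_self_pow₀ one_le_two n.succ_ne_zero) (by positivity)
  calc ∫ s in (0 : ℝ)..t, g0 s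
      ≤ ∫ s in (0 : ℝ)..2 ^ ((n + 1) ^ 2), g0 s :=
        intervalIntegral.integral_mono_interval le_rfl ht hle
          (Eventually.of_forall g0_nonneg) antitone_g0.intervalIntegrable
    _ = 2 * 2 ^ (n + 1) - 3 + 2 / 2 ^ (n + 1) := integral_g0_zero_two_pow_sq (n + 1)
    _ ≤ 4 * (psi0 t + 1) := by linarith [pow_succ (2 : ℝ) n]

lemma aG_mem_Icc {t : ℝ} (ht : 1 ≤ t) : aG t ∈ Icc 0 8 := by
  have hpsi := one_le_psi0 ht
  have hintegral := integral_g0_le_four_mul_psi0_add_one (zero_le_one.trans ht)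
  refine ⟨div_nonneg ?_ (by linarith), (div_le_iff₀ (by linarith)).2 (by linarith)⟩
  exact intervalIntegral.integral_nonneg (by linarith) fun s _ => g0_nonneg s

lemma isBoundedUnder_le_aG : IsBoundedUnder (· ≤ ·) atTop aG :=
  isBoundedUnder_of_eventually_le ((eventually_ge_atTop 1).mono fun _ ht => (aG_mem_Icc ht).2)

lemma isBoundedUnder_ge_aG : IsBoundedUnder (· ≥ ·) atTop aG :=
  isBoundedUnder_of_eventually_ge ((eventually_ge_atTop 1).mono fun _ ht => (aG_mem_Icc ht).1)

/-- `a(2^(n²), g0) → 2` and `a(2^((n+1/2)²), g0) → √2`; hence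
`limsup a(·,g0) ≥ 2 > √2 ≥ liminf a(·,g0)` and `lim_{t→∞} a(t,g0)` does not exist. -/
theorem avA_g0_limit_does_not_exist :
    Filter.Tendsto (fun n : ℕ => aG ((2:ℝ) ^ (n ^ 2))) Filter.atTop (nhds 2) ∧
    Filter.Tendsto (fun n : ℕ => aG ((2:ℝ) ^ (((n:ℝ) + 1/2) ^ 2))) Filter.atTop
      (nhds (Real.sqrt 2)) ∧
    2 ≤ Filter.limsup aG Filter.atTop ∧
    Filter.liminf aG Filter.atTop ≤ Real.sqrt 2 ∧
    Real.sqrt 2 < 2 ∧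
    ¬ ∃ L : ℝ, Filter.Tendsto aG Filter.atTop (nhds L) := by
  have hzero : (0 : ℝ) ∈ Ico 0 1 := by norm_num
  have hhalf : (1 / 2 : ℝ) ∈ Ico 0 1 := by norm_num
  have hsqrt : (2 : ℝ) ^ (1 - 1 / 2 : ℝ) = √2 := by rw [Real.sqrt_eq_rpow]; norm_num
  have hlt : √2 < 2 := (Real.sqrt_lt' two_pos).2 (by norm_num)
  have hlimsup : 2 ≤ limsup aG atTop := by
    simpa using (mapClusterPt_aG hzero).le_limsup isBoundedUnder_le_aG
  have hliminf : liminf aG atTop ≤ √2 :=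
    hsqrt ▸ (mapClusterPt_aG hhalf).liminf_le isBoundedUnder_ge_aG
  refine ⟨?_, hsqrt ▸ tendsto_aG_two_rpow_add_sq hhalf, hlimsup, hliminf, hlt, ?_⟩
  · simpa [rpow_natCast_sq] using tendsto_aG_two_rpow_add_sq hzero
  · rintro ⟨L, hL⟩
    rw [hL.limsup_eq] at hlimsup
    rw [hL.liminf_eq] at hliminf
    linarith
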